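/- arXiv:2003.09349 — 3 statements merged into one kernel-verified Lean document; each statement's English description precedes it below -/
import Mathlib

section
/- For every integer n ≥ 1 and every test function φ on ℂ, lim_{ε→0⁺} ∫_{|z|≥ε} (∂̄φ)(z)/z^{n+1} d²z = −(π/n!)·(∂ⁿφ)(0), where ∂ⁿφ is the n-fold iterate of ∂ applied to φ. (Equivalently, ∂̄(𝒫/z^{n+1}) = ((−1)ⁿ π/n!)·∂ⁿδ(z) in the sense of distributions.) -/
open MeasureTheory Filter

/-- The complex conjugate (Wirtinger) derivative `∂̄φ = (1/2)(∂φ/∂x + i ∂φ/∂y)`. -/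
noncomputable def wirtingerBar (φ : ℂ → ℂ) (z : ℂ) : ℂ :=
  (1 / 2) * (fderiv ℝ φ z 1 + Complex.I * fderiv ℝ φ z Complex.I)

/-- The Wirtinger derivative `∂φ = (1/2)(∂φ/∂x - i ∂φ/∂y)`, as an operator on
functions `ℂ → ℂ` (so that it can be iterated). -/
noncomputable def wirtinger (φ : ℂ → ℂ) : ℂ → ℂ :=
  fun z => (1 / 2) * (fderiv ℝ φ z 1 - Complex.I * fderiv ℝ φ z Complex.I)

open Asymptotics Complex ComplexConjugate Function Set Topology
open scoped Real

/-!
Let `cₖ(φ)(r)` be the `k`-th Fourier coefficient of `φ` on the circle `|z| = r`. The polar form of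
`∂̄` reads `d/dr (cₖ(φ) / rᵏ) = 2 cₖ₊₁(∂̄φ) / rᵏ`, so in polar coordinates the integral of
`∂̄φ / zᵏ⁺¹` over an annulus telescopes to `π` times the difference of the values of `cₖ(φ) / rᵏ` on
the two boundary circles. For compactly supported `φ` only the inner circle contributes, and
`cₙ(φ)(r) = (∂ⁿφ(0) / n!) rⁿ + o(rⁿ)`, by induction on `n` from
`d/dr cₙ(φ) = cₙ₋₁(∂φ) + cₙ₊₁(∂̄φ)`, where the last summand is of higher order.
-/

section RealCalculus

variable {E : Type*} [NormedAddCommGroup E] [NormedSpace ℝ E]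

lemma hasDerivAt_intervalIntegral_of_continuous {𝕜 : Type*} [RCLike 𝕜] [NormedSpace 𝕜 E]
    {μ : Measure ℝ} [IsLocallyFiniteMeasure μ] {F F' : 𝕜 → ℝ → E}
    (hF : ∀ x, Continuous (F x)) (hF' : Continuous (uncurry F'))
    (hderiv : ∀ x t, HasDerivAt (F · t) (F' x t) x) (a b : ℝ) (x : 𝕜) :
    HasDerivAt (fun x ↦ ∫ t in a..b, F x t ∂μ) (∫ t in a..b, F' x t ∂μ) x := by
  obtain ⟨C, hC⟩ := ((isCompact_closedBall x 1).prod (isCompact_uIcc (a := a) (b := b))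
    ).exists_bound_of_continuousOn hF'.continuousOn
  refine (intervalIntegral.hasDerivAt_integral_of_dominated_loc_of_deriv_le
    (bound := fun _ ↦ C) (Metric.closedBall_mem_nhds x one_pos)
    (.of_forall fun y ↦ (hF y).aestronglyMeasurable) ((hF x).intervalIntegrable _ _)
    (hF'.comp (.prodMk_right x)).aestronglyMeasurable ?_ intervalIntegrable_const ?_).2
  · exact .of_forall fun t ht y hy ↦ hC (y, t) ⟨hy, uIoc_subset_uIcc ht⟩
  · exact .of_forall fun t _ y _ ↦ hderiv y t

lemma isLittleO_pow_succ_of_hasDerivAt {f f' : ℝ → E} {n : ℕ}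
    (hf : ∀ x, HasDerivAt f (f' x) x) (hf0 : f 0 = 0) (hf' : f' =o[𝓝 0] fun x ↦ x ^ n) :
    f =o[𝓝 0] fun x ↦ x ^ (n + 1) := by
  simpa [hf0] using convex_univ.isLittleO_pow_succ_real (mem_univ (0 : ℝ))
    (fun x _ ↦ (hf x).hasDerivWithinAt) (by simpa using hf')

lemma setIntegral_annulus_eq_integral_circleMap {f : ℂ → E} {ε R : ℝ} (hε : 0 < ε) (hR : ε ≤ R)
    (hf : ContinuousOn f {z | ‖z‖ ∈ Icc ε R}) :
    ∫ z in {z : ℂ | ‖z‖ ∈ Icc ε R}, f z =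
      ∫ r in ε..R, r • ∫ θ in -π..π, f (circleMap 0 r θ) := by
  have hpolar (p : ℝ × ℝ) : Complex.polarCoord.symm p = circleMap 0 p.1 p.2 := by
    rw [Complex.polarCoord_symm_apply, circleMap_zero, exp_mul_I, ofReal_cos, ofReal_sin]
  have hnorm {p : ℝ × ℝ} (hp : 0 < p.1) : ‖circleMap 0 p.1 p.2‖ = p.1 := by
    rw [norm_circleMap_zero, abs_of_pos hp]
  have hrect : polarCoord.target ∩ Icc ε R ×ˢ univ = Icc ε R ×ˢ Ioo (-π) π := by
    rw [polarCoord_target, prod_inter_prod, inter_univ,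
      inter_eq_right.2 (Icc_subset_Ioi_iff hR |>.2 hε)]
  have hint : IntegrableOn (fun p : ℝ × ℝ ↦ p.1 • f (circleMap 0 p.1 p.2))
      (Icc ε R ×ˢ Ioo (-π) π) := by
    refine IntegrableOn.mono_set (t := Icc ε R ×ˢ Icc (-π) π) ?_
      (prod_mono_right Ioo_subset_Icc_self)
    refine ContinuousOn.integrableOn_compact (isCompact_Icc.prod isCompact_Icc) ?_
    refine continuousOn_fst.smul (hf.comp (by fun_prop [circleMap]) fun p hp ↦ ?_)
    simpa only [mem_ofPred_eq, hnorm (hε.trans_le hp.1.1)] using hp.1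
  calc ∫ z in {z : ℂ | ‖z‖ ∈ Icc ε R}, f z
    _ = ∫ p in polarCoord.target,
          p.1 • indicator {z | ‖z‖ ∈ Icc ε R} f (circleMap 0 p.1 p.2) := by
        simp only [← hpolar]
        rw [Complex.integral_comp_polarCoord_symm]
        exact (integral_indicator (measurable_norm measurableSet_Icc)).symm
    _ = ∫ p in polarCoord.target, indicator (Icc ε R ×ˢ univ)
          (fun p ↦ p.1 • f (circleMap 0 p.1 p.2)) p := by
        refine setIntegral_congr_fun polarCoord.open_target.measurableSet fun p hp ↦ ?_
        simp [indicator, hnorm hp.1]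
    _ = ∫ p in Icc ε R ×ˢ Ioo (-π) π, p.1 • f (circleMap 0 p.1 p.2) := by
        rw [setIntegral_indicator (measurableSet_Icc.prod .univ), hrect]
    _ = ∫ r in Icc ε R, ∫ θ in Ioo (-π) π, r • f (circleMap 0 r θ) := setIntegral_prod _ hint
    _ = ∫ r in ε..R, r • ∫ θ in -π..π, f (circleMap 0 r θ) := by
        simp only [integral_smul, intervalIntegral.integral_of_le hR,
          intervalIntegral.integral_of_le (by linarith [Real.pi_pos] : -π ≤ π),
          integral_Icc_eq_integral_Ioc, integral_Ioc_eq_integral_Ioo]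

end RealCalculus

section Wirtinger

variable {φ : ℂ → ℂ}

lemma fderiv_eq_wirtinger_add_wirtingerBar (φ : ℂ → ℂ) (z v : ℂ) :
    fderiv ℝ φ z v = wirtinger φ z * v + wirtingerBar φ z * conj v := by
  have hlin : fderiv ℝ φ z v = v.re * fderiv ℝ φ z 1 + v.im * fderiv ℝ φ z I := by
    have hv : v = v.re • (1 : ℂ) + v.im • I := by simp [re_add_im]
    conv_lhs => rw [hv, map_add, map_smul, map_smul, real_smul, real_smul]
  have hconj : conj v = v.re - v.im * I := by apply Complex.ext <;> simp
  rw [hlin, hconj, wirtinger, wirtingerBar]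
  linear_combination v.im * fderiv ℝ φ z I * I_sq +
    (1 / 2) * (fderiv ℝ φ z 1 - I * fderiv ℝ φ z I) * re_add_im v

lemma hasDerivAt_comp_of_wirtinger {γ : ℝ → ℂ} {γ' : ℂ} {t : ℝ}
    (hφ : DifferentiableAt ℝ φ (γ t)) (hγ : HasDerivAt γ γ' t) :
    HasDerivAt (fun t ↦ φ (γ t)) (wirtinger φ (γ t) * γ' + wirtingerBar φ (γ t) * conj γ') t := by
  rw [← fderiv_eq_wirtinger_add_wirtingerBar]
  exact hφ.hasFDerivAt.comp_hasDerivAt t hγ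

lemma contDiff_wirtinger {n : WithTop ℕ∞} (hφ : ContDiff ℝ (n + 1) φ) :
    ContDiff ℝ n (wirtinger φ) := by
  have := hφ.fderiv_right le_rfl
  unfold wirtinger
  fun_prop

lemma contDiff_wirtingerBar {n : WithTop ℕ∞} (hφ : ContDiff ℝ (n + 1) φ) :
    ContDiff ℝ n (wirtingerBar φ) := by
  have := hφ.fderiv_right le_rfl
  unfold wirtingerBar
  fun_prop

lemma continuous_wirtinger (hφ : ContDiff ℝ 1 φ) : Continuous (wirtinger φ) :=
  (contDiff_wirtinger (n := 0) (by simpa using hφ)).continuous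

lemma continuous_wirtingerBar (hφ : ContDiff ℝ 1 φ) : Continuous (wirtingerBar φ) :=
  (contDiff_wirtingerBar (n := 0) (by simpa using hφ)).continuous

lemma wirtingerBar_eq_zero_of_notMem_tsupport {z : ℂ} (hz : z ∉ tsupport φ) :
    wirtingerBar φ z = 0 := by
  simp [wirtingerBar, fderiv_of_notMem_tsupport ℝ hz]

end Wirtinger

/-- The function `θ ↦ φ (r e^{iθ}) e^{-ikθ}` whose mean over a period is the `k`-th Fourier
coefficient of `φ` on the circle of radius `r` about the origin. -/
noncomputable def circleFourierIntegrand (k : ℤ) (φ : ℂ → ℂ) (r θ : ℝ) : ℂ :=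
  φ (circleMap 0 r θ) * exp (-(k * θ * I))

/-- The `k`-th Fourier coefficient of `φ` on the circle of radius `r` about the origin. The circle
is parametrized by its angle rather than written as a contour integral of `φ z / z ^ (k + 1)`, so
that the coefficient is also meaningful (and smooth in `r`) at `r = 0`. -/
noncomputable def circleFourierCoeff (k : ℤ) (φ : ℂ → ℂ) (r : ℝ) : ℂ :=
  (2 * π : ℂ)⁻¹ * ∫ θ in -π..π, circleFourierIntegrand k φ r θ

section CircleFourierCoeff

variable {φ : ℂ → ℂ} (k : ℤ)

lemma continuous_circleFourierIntegrand (hφ : Continuous φ) :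
    Continuous (uncurry (circleFourierIntegrand k φ)) := by
  simp only [uncurry_def, circleFourierIntegrand, circleMap]
  fun_prop

lemma intervalIntegrable_circleFourierIntegrand (hφ : Continuous φ) (r a b : ℝ) :
    IntervalIntegrable (circleFourierIntegrand k φ r) volume a b :=
  ((continuous_circleFourierIntegrand k hφ).comp (.prodMk_right r)).intervalIntegrable a b

lemma continuous_circleFourierCoeff (hφ : Continuous φ) : Continuous (circleFourierCoeff k φ) :=
  continuous_const.mul <| intervalIntegral.continuous_parametric_intervalIntegral_of_continuous'
    (continuous_circleFourierIntegrand k hφ) _ _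

lemma periodic_circleFourierIntegrand (φ : ℂ → ℂ) (r : ℝ) :
    Periodic (circleFourierIntegrand k φ r) (2 * π) := fun θ ↦ by
  have hexp : exp (-(k * (θ + 2 * π : ℝ) * I)) = exp (-(k * θ * I)) :=
    exp_eq_exp_iff_exists_int.2 ⟨-k, by push_cast; ring⟩
  rw [circleFourierIntegrand, circleFourierIntegrand, periodic_circleMap, hexp]

lemma circleFourierIntegrand_sub_one (φ : ℂ → ℂ) (r θ : ℝ) :
    circleFourierIntegrand (k - 1) φ r θ = circleFourierIntegrand k φ r θ * exp (θ * I) := by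
  rw [circleFourierIntegrand, circleFourierIntegrand, mul_assoc (φ _), ← exp_add]
  push_cast
  ring_nf

lemma circleFourierIntegrand_add_one (φ : ℂ → ℂ) (r θ : ℝ) :
    circleFourierIntegrand (k + 1) φ r θ = circleFourierIntegrand k φ r θ * conj (exp (θ * I)) := by
  rw [circleFourierIntegrand, circleFourierIntegrand, mul_assoc (φ _), ← exp_conj, ← exp_add]
  simp only [map_mul, conj_I, conj_ofReal]
  push_cast
  ring_nf

lemma hasDerivAt_circleFourierIntegrand_radius (hφ : Differentiable ℝ φ) (r θ : ℝ) :
    HasDerivAt (circleFourierIntegrand k φ · θ)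
      (circleFourierIntegrand (k - 1) (wirtinger φ) r θ +
        circleFourierIntegrand (k + 1) (wirtingerBar φ) r θ) r := by
  have hray : HasDerivAt (circleMap 0 · θ) (exp (θ * I)) r := by
    simpa [circleMap] using (hasDerivAt_id r).ofReal_comp.mul_const (exp (θ * I))
  refine ((hasDerivAt_comp_of_wirtinger (hφ _) hray).mul_const _).congr_deriv ?_
  rw [circleFourierIntegrand_sub_one, circleFourierIntegrand_add_one, circleFourierIntegrand,
    circleFourierIntegrand]
  ring

lemma hasDerivAt_circleFourierIntegrand_angle (hφ : Differentiable ℝ φ) (r θ : ℝ) :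
    HasDerivAt (circleFourierIntegrand k φ r)
      (I * (r * circleFourierIntegrand (k - 1) (wirtinger φ) r θ -
        r * circleFourierIntegrand (k + 1) (wirtingerBar φ) r θ -
        k * circleFourierIntegrand k φ r θ)) θ := by
  have hexp : HasDerivAt (fun θ : ℝ ↦ exp (-(k * θ * I))) (exp (-(k * θ * I)) * -(k * I)) θ := by
    simpa using (((hasDerivAt_id θ).ofReal_comp.const_mul (k : ℂ)).mul_const I).neg.cexp
  have hcomp := hasDerivAt_comp_of_wirtinger (hφ _) (hasDerivAt_circleMap 0 r θ)
  refine (hcomp.mul hexp).congr_deriv ?_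
  rw [circleFourierIntegrand_sub_one, circleFourierIntegrand_add_one]
  simp only [circleFourierIntegrand, circleMap_zero, map_mul, conj_I, conj_ofReal]
  ring

lemma hasDerivAt_circleFourierCoeff (hφ : ContDiff ℝ 1 φ) (r : ℝ) :
    HasDerivAt (circleFourierCoeff k φ)
      (circleFourierCoeff (k - 1) (wirtinger φ) r +
        circleFourierCoeff (k + 1) (wirtingerBar φ) r) r := by
  have hw := continuous_wirtinger hφ
  have hwb := continuous_wirtingerBar hφ
  simp only [circleFourierCoeff]
  rw [← mul_add, ← intervalIntegral.integral_add
    (intervalIntegrable_circleFourierIntegrand _ hw _ _ _)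
    (intervalIntegrable_circleFourierIntegrand _ hwb _ _ _)]
  refine (hasDerivAt_intervalIntegral_of_continuous
    (fun r ↦ (continuous_circleFourierIntegrand k hφ.continuous).comp (.prodMk_right r))
    (F' := circleFourierIntegrand (k - 1) (wirtinger φ) +
      circleFourierIntegrand (k + 1) (wirtingerBar φ))
    ((continuous_circleFourierIntegrand _ hw).add (continuous_circleFourierIntegrand _ hwb))
    (hasDerivAt_circleFourierIntegrand_radius k (hφ.differentiable one_ne_zero))
    _ _ r).const_mul _

lemma intCast_mul_circleFourierCoeff (hφ : ContDiff ℝ 1 φ) (r : ℝ) :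
    k * circleFourierCoeff k φ r =
      r * circleFourierCoeff (k - 1) (wirtinger φ) r -
        r * circleFourierCoeff (k + 1) (wirtingerBar φ) r := by
  have hint := intervalIntegrable_circleFourierIntegrand k hφ.continuous r (-π) π
  have hintw := intervalIntegrable_circleFourierIntegrand (k - 1) (continuous_wirtinger hφ) r (-π) π
  have hintwb :=
    intervalIntegrable_circleFourierIntegrand (k + 1) (continuous_wirtingerBar hφ) r (-π) π
  have hperiod : circleFourierIntegrand k φ r π = circleFourierIntegrand k φ r (-π) := by
    rw [← periodic_circleFourierIntegrand k φ r (-π)]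
    ring_nf
  have hzero := intervalIntegral.integral_eq_sub_of_hasDerivAt
    (fun θ _ ↦ hasDerivAt_circleFourierIntegrand_angle k (hφ.differentiable one_ne_zero) r θ)
    ((((hintw.const_mul _).sub (hintwb.const_mul _)).sub (hint.const_mul _)).const_mul I)
  rw [hperiod, sub_self, intervalIntegral.integral_const_mul, mul_eq_zero_iff_left I_ne_zero,
    intervalIntegral.integral_sub ((hintw.const_mul _).sub (hintwb.const_mul _))
      (hint.const_mul _),
    intervalIntegral.integral_sub (hintw.const_mul _) (hintwb.const_mul _)] at hzero
  simp only [intervalIntegral.integral_const_mul] at hzero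
  simp only [circleFourierCoeff]
  linear_combination -(2 * π : ℂ)⁻¹ * hzero

end CircleFourierCoeff

section Expansion

variable {φ : ℂ → ℂ}

lemma circleFourierCoeff_zero_radius_of_ne_zero {k : ℤ} (hk : k ≠ 0) (φ : ℂ → ℂ) :
    circleFourierCoeff k φ 0 = 0 := by
  have hconst : circleFourierCoeff k φ 0 = circleFourierCoeff k (fun _ ↦ φ 0) 0 := by
    simp [circleFourierCoeff, circleFourierIntegrand]
  simpa [hk, ← hconst] using
    intCast_mul_circleFourierCoeff k (contDiff_const (c := φ 0)) 0

lemma circleFourierCoeff_zero_zero_radius (φ : ℂ → ℂ) : circleFourierCoeff 0 φ 0 = φ 0 := by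
  have hpi : (2 * π : ℂ) ≠ 0 := mod_cast Real.two_pi_pos.ne'
  have hmean : ∫ θ in -π..π, circleFourierIntegrand 0 φ 0 θ = 2 * π * φ 0 := by
    simp [circleFourierIntegrand, ← two_mul]
  rw [circleFourierCoeff, hmean, inv_mul_cancel_left₀ hpi]

lemma circleFourierCoeff_isLittleO_pow {m : ℕ} {k : ℤ} (hmk : m < k) (hφ : ContDiff ℝ m φ) :
    circleFourierCoeff k φ =o[𝓝 0] fun r ↦ r ^ m := by
  induction m generalizing k φ with
  | zero =>
    simpa using (continuous_circleFourierCoeff k hφ.continuous).tendsto' 0 0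
      (circleFourierCoeff_zero_radius_of_ne_zero (by lia) φ)
  | succ m ih =>
    push_cast at hmk hφ
    exact isLittleO_pow_succ_of_hasDerivAt
      (hasDerivAt_circleFourierCoeff k (hφ.of_le le_add_self))
      (circleFourierCoeff_zero_radius_of_ne_zero (by lia) φ)
      ((ih (by lia) (contDiff_wirtinger hφ)).add (ih (by lia) (contDiff_wirtingerBar hφ)))

lemma circleFourierCoeff_sub_isLittleO_pow (n : ℕ) (hφ : ContDiff ℝ n φ) :
    (fun r : ℝ ↦ circleFourierCoeff n φ r - (wirtinger^[n] φ) 0 / n.factorial * (r : ℂ) ^ n)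
      =o[𝓝 0] fun r ↦ r ^ n := by
  induction n generalizing φ with
  | zero =>
    have hcont := (continuous_circleFourierCoeff 0 hφ.continuous).tendsto 0
    rw [circleFourierCoeff_zero_zero_radius, ← tendsto_sub_nhds_zero_iff] at hcont
    simpa using hcont
  | succ n ih =>
    push_cast at hφ
    set a : ℂ := (wirtinger^[n + 1] φ) 0 / (n + 1).factorial with ha
    have hpow (r : ℝ) :
        HasDerivAt (fun r : ℝ ↦ a * (r : ℂ) ^ (n + 1)) (a * ((n + 1) * r ^ n)) r := by
      simpa using ((hasDerivAt_id r).ofReal_comp.fun_pow (n + 1)).const_mul a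
    have hfactorial : (wirtinger^[n] (wirtinger φ)) 0 / n.factorial = a * (n + 1) := by
      rw [ha, iterate_succ_apply, Nat.factorial_succ]
      push_cast
      field_simp
    refine isLittleO_pow_succ_of_hasDerivAt (fun r ↦
      (hasDerivAt_circleFourierCoeff _ (hφ.of_le le_add_self) r).sub (hpow r))
      (by rw [circleFourierCoeff_zero_radius_of_ne_zero (by lia)]; simp) ?_
    refine ((ih (contDiff_wirtinger hφ)).add (circleFourierCoeff_isLittleO_pow
      (k := n + 1 + 1) (by lia) (contDiff_wirtingerBar hφ))).congr_left fun r ↦ ?_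
    rw [hfactorial]
    push_cast
    rw [add_sub_cancel_right]
    ring

lemma tendsto_circleFourierCoeff_div_pow (n : ℕ) (hφ : ContDiff ℝ n φ) :
    Tendsto (fun r : ℝ ↦ circleFourierCoeff n φ r / (r : ℂ) ^ n) (𝓝[≠] 0)
      (𝓝 ((wirtinger^[n] φ) 0 / n.factorial)) := by
  have hdiff := ((circleFourierCoeff_sub_isLittleO_pow n hφ).mono
    nhdsWithin_le_nhds).trans_isBigO
      (isBigO_of_le (𝓝[≠] 0) (g := fun r : ℝ ↦ (r : ℂ) ^ n) fun r ↦ by simp)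
  rw [← tendsto_sub_nhds_zero_iff]
  refine hdiff.tendsto_div_nhds_zero.congr' (eventually_nhdsWithin_of_forall fun r hr ↦ ?_)
  have hr' : (r : ℂ) ≠ 0 := ofReal_ne_zero.2 hr
  field_simp

end Expansion

section Annulus

variable {φ : ℂ → ℂ} (k : ℤ)

lemma hasDerivAt_circleFourierCoeff_div_zpow (hφ : ContDiff ℝ 1 φ) {r : ℝ} (hr : r ≠ 0) :
    HasDerivAt (fun r : ℝ ↦ circleFourierCoeff k φ r / (r : ℂ) ^ k)
      (2 * (circleFourierCoeff (k + 1) (wirtingerBar φ) r / (r : ℂ) ^ k)) r := by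
  have hr' : (r : ℂ) ≠ 0 := ofReal_ne_zero.2 hr
  have hpow : HasDerivAt (fun r : ℝ ↦ (r : ℂ) ^ k) (k * (r : ℂ) ^ (k - 1)) r :=
    (hasDerivAt_zpow k (r : ℂ) (.inl hr')).comp_ofReal
  refine ((hasDerivAt_circleFourierCoeff k hφ r).div hpow (zpow_ne_zero k hr')).congr_deriv ?_
  have hang := intCast_mul_circleFourierCoeff k hφ r
  rw [zpow_sub_one₀ hr']
  field_simp
  linear_combination -hang

lemma smul_integral_circleMap_div_zpow (f : ℂ → ℂ) {r : ℝ} (hr : r ≠ 0) :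
    r • ∫ θ in -π..π, f (circleMap 0 r θ) / circleMap 0 r θ ^ (k + 1) =
      2 * π * (circleFourierCoeff (k + 1) f r / (r : ℂ) ^ k) := by
  have hr' : (r : ℂ) ≠ 0 := ofReal_ne_zero.2 hr
  have hintegrand (θ : ℝ) : f (circleMap 0 r θ) / circleMap 0 r θ ^ (k + 1) =
      ((r : ℂ) ^ (k + 1))⁻¹ * circleFourierIntegrand (k + 1) f r θ := by
    rw [circleFourierIntegrand, exp_neg, circleMap_zero, mul_zpow, ← exp_int_mul, ← mul_assoc]
    field_simp
  simp only [hintegrand, intervalIntegral.integral_const_mul, circleFourierCoeff, real_smul,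
    zpow_add_one₀ hr']
  field_simp

lemma setIntegral_annulus_wirtingerBar_div_zpow (hφ : ContDiff ℝ 1 φ) {ε R : ℝ} (hε : 0 < ε)
    (hR : ε ≤ R) :
    ∫ z in {z : ℂ | ‖z‖ ∈ Icc ε R}, wirtingerBar φ z / z ^ (k + 1) =
      π * (circleFourierCoeff k φ R / (R : ℂ) ^ k - circleFourierCoeff k φ ε / (ε : ℂ) ^ k) := by
  have hwb := continuous_wirtingerBar hφ
  have hpos {r : ℝ} (hr : r ∈ uIcc ε R) : r ≠ 0 :=
    (hε.trans_le (uIcc_of_le hR ▸ hr).1).ne'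
  have hne {z : ℂ} (hz : ‖z‖ ∈ Icc ε R) : z ≠ 0 := norm_pos_iff.1 (hε.trans_le hz.1)
  have hcont : ContinuousOn (fun z ↦ wirtingerBar φ z / z ^ (k + 1)) {z | ‖z‖ ∈ Icc ε R} :=
    hwb.continuousOn.div (continuousOn_id.zpow₀ _ fun z hz ↦ .inl (hne hz))
      fun z hz ↦ zpow_ne_zero _ (hne hz)
  have hcoeff : ContinuousOn
      (fun r : ℝ ↦ 2 * (circleFourierCoeff (k + 1) (wirtingerBar φ) r / (r : ℂ) ^ k))
      (uIcc ε R) :=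
    continuousOn_const.mul ((continuous_circleFourierCoeff (k + 1) hwb).continuousOn.div
      (continuous_ofReal.continuousOn.zpow₀ k fun r hr ↦ .inl (ofReal_ne_zero.2 (hpos hr)))
      fun r hr ↦ zpow_ne_zero k (ofReal_ne_zero.2 (hpos hr)))
  calc ∫ z in {z : ℂ | ‖z‖ ∈ Icc ε R}, wirtingerBar φ z / z ^ (k + 1)
    _ = ∫ r in ε..R, r • ∫ θ in -π..π,
          wirtingerBar φ (circleMap 0 r θ) / circleMap 0 r θ ^ (k + 1) :=
        setIntegral_annulus_eq_integral_circleMap hε hR hcont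
    _ = ∫ r in ε..R, π * (2 * (circleFourierCoeff (k + 1) (wirtingerBar φ) r / (r : ℂ) ^ k)) := by
        refine intervalIntegral.integral_congr fun r hr ↦ ?_
        simp only [smul_integral_circleMap_div_zpow k _ (hpos hr)]
        ring
    _ = _ := by
        rw [intervalIntegral.integral_const_mul, intervalIntegral.integral_eq_sub_of_hasDerivAt
          (fun r hr ↦ hasDerivAt_circleFourierCoeff_div_zpow k hφ (hpos hr))
          hcoeff.intervalIntegrable]

lemma setIntegral_le_norm_wirtingerBar_div_zpow (hφ : ContDiff ℝ 1 φ) (hsupp : HasCompactSupport φ)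
    {ε : ℝ} (hε : 0 < ε) :
    ∫ z in {z : ℂ | ε ≤ ‖z‖}, wirtingerBar φ z / z ^ (k + 1) =
      -π * (circleFourierCoeff k φ ε / (ε : ℂ) ^ k) := by
  obtain ⟨R₀, -, hR₀⟩ := hsupp.isCompact.isBounded.exists_pos_norm_lt
  obtain ⟨R, hεR, hR₀R⟩ : ∃ R, ε ≤ R ∧ R₀ ≤ R := ⟨max ε R₀, le_max_left _ _, le_max_right _ _⟩
  have hR {z : ℂ} (hz : R ≤ ‖z‖) : z ∉ tsupport φ := fun h ↦ (hR₀ z h).not_ge (hR₀R.trans hz)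
  have hcoeff : circleFourierCoeff k φ R = 0 := by
    have hzero (θ : ℝ) : φ (circleMap 0 R θ) = 0 :=
      image_eq_zero_of_notMem_tsupport (hR (by simpa using le_abs_self R))
    simp [circleFourierCoeff, circleFourierIntegrand, hzero]
  calc ∫ z in {z : ℂ | ε ≤ ‖z‖}, wirtingerBar φ z / z ^ (k + 1)
    _ = ∫ z in {z : ℂ | ‖z‖ ∈ Icc ε R}, wirtingerBar φ z / z ^ (k + 1) := by
        refine setIntegral_eq_of_subset_of_forall_sdiff_eq_zero
          (measurableSet_le measurable_const measurable_norm) (fun z hz ↦ hz.1) fun z hz ↦ ?_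
        have hz' : R ≤ ‖z‖ := le_of_not_ge fun h ↦ hz.2 ⟨hz.1, h⟩
        rw [wirtingerBar_eq_zero_of_notMem_tsupport (hR hz'), zero_div]
    _ = -π * (circleFourierCoeff k φ ε / (ε : ℂ) ^ k) := by
        rw [setIntegral_annulus_wirtingerBar_div_zpow k hφ hε hεR, hcoeff]
        ring

end Annulus

theorem tendsto_integral_wirtingerBar_div_pow_general (n : ℕ) {φ : ℂ → ℂ}
    (hφ : ContDiff ℝ (max 1 n : ℕ) φ) (hsupp : HasCompactSupport φ) :
    Tendsto (fun ε : ℝ ↦ ∫ z in {z : ℂ | ε ≤ ‖z‖}, wirtingerBar φ z / z ^ (n + 1)) (𝓝[>] 0)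
      (𝓝 (-(π / n.factorial) * (wirtinger^[n] φ) 0)) := by
  have hφ₁ : ContDiff ℝ 1 φ := hφ.of_le (by exact_mod_cast le_max_left 1 n)
  have hφₙ : ContDiff ℝ n φ := hφ.of_le (by exact_mod_cast le_max_right 1 n)
  have hlim : Tendsto (fun ε : ℝ ↦ -π * (circleFourierCoeff n φ ε / (ε : ℂ) ^ n)) (𝓝[>] 0)
      (𝓝 (-π * ((wirtinger^[n] φ) 0 / n.factorial))) :=
    ((tendsto_circleFourierCoeff_div_pow n hφₙ).mono_left (nhdsGT_le_nhdsNE 0)).const_mul _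
  rw [← neg_div, div_mul_eq_mul_div, mul_div_assoc]
  refine hlim.congr' (eventually_nhdsWithin_of_forall fun ε hε ↦ ?_)
  exact_mod_cast (setIntegral_le_norm_wirtingerBar_div_zpow n hφ₁ hsupp hε).symm

/-- For `n ≥ 1` and a test function `φ` on `ℂ`,
`lim_{ε→0⁺} ∫_{|z|≥ε} (∂̄φ)(z)/z^{n+1} d²z = -(π/n!) (∂ⁿφ)(0)`,
i.e. `∂̄(𝒫/z^{n+1}) = ((-1)ⁿ π/n!) ∂ⁿδ(z)` as distributions. -/
theorem tendsto_integral_wirtingerBar_div_pow (n : ℕ) (hn : 1 ≤ n) (φ : ℂ → ℂ)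
    (hφ : ContDiff ℝ (⊤ : ℕ∞) φ) (hsupp : HasCompactSupport φ) :
    Tendsto (fun ε : ℝ => ∫ z in {z : ℂ | ε ≤ ‖z‖}, wirtingerBar φ z / z ^ (n + 1))
      (nhdsWithin 0 (Set.Ioi 0))
      (nhds (-((Real.pi : ℂ) / (n.factorial : ℂ)) * (wirtinger^[n] φ) 0)) := by
  exact tendsto_integral_wirtingerBar_div_pow_general n (hφ.of_le (mod_cast le_top)) hsupp
end

section
/- For every test function φ on ℝ: lim_{u→0⁺} ∫_ℝ φ(x)/(x + iu) dx = −∫_ℝ φ′(x)·ln|x| dx − iπ·φ(0), and lim_{u→0⁻} ∫_ℝ φ(x)/(x + iu) dx = −∫_ℝ φ′(x)·ln|x| dx + iπ·φ(0). (Here −∫ φ′(x) ln|x| dx is the principal-value pairing ⟨𝒫/x, φ⟩, so this states 1/(x ± i0) = 𝒫/x ∓ iπδ(x).) -/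
open MeasureTheory Filter

/-!
Integrating by parts turns `∫ φ(x) / (x + iu) dx` into `-∫ φ'(x) log(x + iu) dx` with the principal
branch of the logarithm. This branch is continuous up to the real axis from above, so dominated
convergence gives the limit `-∫ φ'(x) log x dx` as `u → 0⁺`. On the negative axis
`log x = ln|x| + iπ`, and integrating `iπ φ'` over that axis produces the term `iπ φ(0)`. The limit
`u → 0⁻` is the same statement for `x ↦ φ(-x)`.
-/

theorem locallyIntegrable_log : LocallyIntegrable Real.log := fun x =>
  ⟨Set.Ioc (x - 1) (x + 1), Ioc_mem_nhds (by linarith) (by linarith),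
    (intervalIntegrable_iff_integrableOn_Ioc_of_le (by linarith)).1
      intervalIntegral.intervalIntegrable_log'⟩

section ComplexLog

theorem norm_complexLog_le {z : ℂ} (hre : z.re ≠ 0) (him : |z.im| ≤ 1) :
    ‖Complex.log z‖ ≤ |Real.log z.re| + |z.re| + Real.pi := by
  have hre_pos : 0 < |z.re| := abs_pos.2 hre
  have hlower : Real.log z.re ≤ Real.log ‖z‖ := by
    rw [← Real.log_abs z.re]
    exact Real.log_le_log hre_pos z.abs_re_le_norm
  have hupper : Real.log ‖z‖ ≤ |z.re| := by
    have := Real.log_le_sub_one_of_pos (hre_pos.trans_le z.abs_re_le_norm)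
    linarith [z.norm_le_abs_re_add_abs_im]
  have hlog_norm : |Real.log ‖z‖| ≤ |Real.log z.re| + |z.re| :=
    abs_le.2 ⟨by linarith [neg_abs_le (Real.log z.re)], by linarith [abs_nonneg (Real.log z.re)]⟩
  calc ‖Complex.log z‖
      ≤ |(Complex.log z).re| + |(Complex.log z).im| := Complex.norm_le_abs_re_add_abs_im _
    _ ≤ |Real.log z.re| + |z.re| + Real.pi := by
        rw [Complex.log_re, Complex.log_im]
        exact add_le_add hlog_norm (Complex.abs_arg_le_pi z)

theorem continuousWithinAt_complexLog_im_nonneg {z : ℂ} (hz : z ≠ 0) :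
    ContinuousWithinAt Complex.log {w | 0 ≤ w.im} z := by
  by_cases hslit : z ∈ Complex.slitPlane
  · exact (continuousAt_clog hslit).continuousWithinAt
  · obtain ⟨hre, him⟩ : z.re ≤ 0 ∧ z.im = 0 := by
      simpa [Complex.mem_slitPlane_iff] using hslit
    have hre_ne : z.re ≠ 0 := fun h => hz (Complex.ext h him)
    exact Complex.continuousWithinAt_log_of_re_neg_of_im_zero (hre.lt_of_ne hre_ne) him

theorem tendsto_complexLog_add_I_mul_nhdsGT {z : ℂ} (hz : z ≠ 0) (him : 0 ≤ z.im) :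
    Tendsto (fun u : ℝ => Complex.log (z + Complex.I * u)) (nhdsWithin 0 (Set.Ioi 0))
      (nhds (Complex.log z)) := by
  refine (continuousWithinAt_complexLog_im_nonneg hz).tendsto.comp
    (tendsto_nhdsWithin_iff.2 ⟨?_, ?_⟩)
  · exact (Continuous.tendsto' (by fun_prop) 0 z (by simp)).mono_left nhdsWithin_le_nhds
  · filter_upwards [self_mem_nhdsWithin] with u hu
    simpa using add_nonneg him (le_of_lt hu)

theorem complexLog_ofReal_eq_log_abs_add_indicator (x : ℝ) :
    Complex.log x =
      (Real.log |x| : ℂ) + (Set.Iio (0 : ℝ)).indicator (fun _ => Complex.I * Real.pi) x := by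
  rcases lt_or_ge x 0 with hx | hx
  · rw [Set.indicator_of_mem (Set.mem_Iio.2 hx), Complex.log, Complex.norm_real, Real.norm_eq_abs,
      Complex.arg_ofReal_of_neg hx, mul_comm Complex.I]
  · rw [Set.indicator_of_notMem (Set.notMem_Iio.2 hx), add_zero, abs_of_nonneg hx,
      Complex.ofReal_log hx]

theorem hasDerivAt_complexLog_add_I_mul {u : ℝ} (hu : u ≠ 0) (x : ℝ) :
    HasDerivAt (fun y : ℝ => Complex.log (y + Complex.I * u)) (x + Complex.I * u : ℂ)⁻¹ x := by
  have hslit : (x + Complex.I * u : ℂ) ∈ Complex.slitPlane :=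
    Complex.mem_slitPlane_iff.2 (Or.inr (by simpa using hu))
  simpa using ((Complex.ofRealCLM.hasDerivAt (x := x)).add_const (Complex.I * u)).clog_real hslit

end ComplexLog

section SokhotskiPlemelj

variable {E : Type*} [NormedAddCommGroup E] [NormedSpace ℂ E] {φ : ℝ → E}

theorem integral_inv_add_I_mul_smul_eq_neg_integral_complexLog_smul_deriv
    (hφ : ContDiff ℝ 1 φ) (hsupp : HasCompactSupport φ) {u : ℝ} (hu : u ≠ 0) :
    ∫ x : ℝ, (x + Complex.I * u : ℂ)⁻¹ • φ x =
      -∫ x : ℝ, Complex.log (x + Complex.I * u) • deriv φ x := by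
  have hlog := hasDerivAt_complexLog_add_I_mul hu
  have hlog_cont : Continuous fun x : ℝ => Complex.log (x + Complex.I * u) :=
    continuous_iff_continuousAt.2 fun x => (hlog x).continuousAt
  have hinv_cont : Continuous fun x : ℝ => (x + Complex.I * u : ℂ)⁻¹ := by
    refine Continuous.inv₀ (by fun_prop) fun x hx => hu ?_
    simpa using congrArg Complex.im hx
  have hderiv_cont : Continuous (deriv φ) := hφ.continuous_deriv le_rfl
  have hparts : ∫ x : ℝ, Complex.log (x + Complex.I * u) • deriv φ x =
      -∫ x : ℝ, (x + Complex.I * u : ℂ)⁻¹ • φ x :=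
    integral_bilinear_hasDerivAt_right_eq_neg_left_of_integrable
      (L := ContinuousLinearMap.lsmul ℝ ℂ) (fun x _ => hlog x)
      (fun x _ => (hφ.differentiable one_ne_zero x).hasDerivAt)
      ((hlog_cont.smul hderiv_cont).integrable_of_hasCompactSupport hsupp.deriv.smul_left)
      ((hinv_cont.smul hφ.continuous).integrable_of_hasCompactSupport hsupp.smul_left)
      ((hlog_cont.smul hφ.continuous).integrable_of_hasCompactSupport hsupp.smul_left)
  rw [hparts, neg_neg]

theorem tendsto_integral_complexLog_add_I_mul_smul_nhdsGT {g : ℝ → E} (hg : Continuous g)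
    (hsupp : HasCompactSupport g) :
    Tendsto (fun u : ℝ => ∫ x : ℝ, Complex.log (x + Complex.I * u) • g x)
      (nhdsWithin 0 (Set.Ioi 0)) (nhds (∫ x : ℝ, Complex.log x • g x)) := by
  have hbound : LocallyIntegrable fun x : ℝ => |Real.log x| + |x| + Real.pi :=
    (LocallyIntegrable.add (fun x => (locallyIntegrable_log x).norm)
      continuous_abs.locallyIntegrable).add (locallyIntegrable_const _)
  refine tendsto_integral_filter_of_dominated_convergence
    (fun x => (|Real.log x| + |x| + Real.pi) • ‖g x‖) ?_ ?_
    (hbound.integrable_smul_right_of_hasCompactSupport hg.norm hsupp.norm) ?_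
  · refine Eventually.of_forall fun u => AEStronglyMeasurable.smul ?_ hg.aestronglyMeasurable
    exact (Complex.measurable_log.comp
      (Complex.measurable_ofReal.add_const _)).aestronglyMeasurable
  · filter_upwards [Ioo_mem_nhdsGT one_pos] with u hu
    filter_upwards [Measure.ae_ne volume (0 : ℝ)] with x hx
    rw [norm_smul, smul_eq_mul]
    gcongr
    simpa using norm_complexLog_le (z := x + Complex.I * u) (by simpa using hx)
      (by simpa using abs_le.2 ⟨by linarith [hu.1], hu.2.le⟩)
  · filter_upwards [Measure.ae_ne volume (0 : ℝ)] with x hx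
    exact (tendsto_complexLog_add_I_mul_nhdsGT (Complex.ofReal_ne_zero.2 hx)
      (Complex.ofReal_im x).ge).smul_const _

theorem integrable_log_abs_smul {g : ℝ → E} (hg : Continuous g) (hsupp : HasCompactSupport g) :
    Integrable fun x : ℝ => (Real.log |x| : ℂ) • g x := by
  simpa only [Real.log_abs, Complex.coe_smul] using
    locallyIntegrable_log.integrable_smul_right_of_hasCompactSupport hg hsupp

theorem integral_complexLog_smul_deriv [CompleteSpace E] (hφ : ContDiff ℝ 1 φ)
    (hsupp : HasCompactSupport φ) :
    ∫ x : ℝ, Complex.log x • deriv φ x =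
      (∫ x : ℝ, (Real.log |x| : ℂ) • deriv φ x) + (Complex.I * Real.pi) • φ 0 := by
  have hderiv_cont : Continuous (deriv φ) := hφ.continuous_deriv le_rfl
  have hjump_int : Integrable
      ((Set.Iio (0 : ℝ)).indicator fun x => (Complex.I * Real.pi : ℂ) • deriv φ x) :=
    ((hderiv_cont.integrable_of_hasCompactSupport hsupp.deriv).smul _).indicator measurableSet_Iio
  have hjump : ∫ x : ℝ,
      (Set.Iio (0 : ℝ)).indicator (fun x => (Complex.I * Real.pi : ℂ) • deriv φ x) x =
        (Complex.I * Real.pi : ℂ) • φ 0 := by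
    rw [integral_indicator measurableSet_Iio, integral_smul, ← integral_Iic_eq_integral_Iio,
      hsupp.integral_Iic_deriv_eq hφ]
  simp_rw [complexLog_ofReal_eq_log_abs_add_indicator, add_smul, ← Set.indicator_smul_apply_left]
  rw [integral_add (integrable_log_abs_smul hderiv_cont hsupp.deriv) hjump_int, hjump]

theorem tendsto_integral_inv_add_I_mul_smul_nhdsGT [CompleteSpace E] (hφ : ContDiff ℝ 1 φ)
    (hsupp : HasCompactSupport φ) :
    Tendsto (fun u : ℝ => ∫ x : ℝ, (x + Complex.I * u : ℂ)⁻¹ • φ x)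
      (nhdsWithin 0 (Set.Ioi 0))
      (nhds ((-∫ x : ℝ, (Real.log |x| : ℂ) • deriv φ x) - (Complex.I * Real.pi) • φ 0)) := by
  rw [← neg_add', ← integral_complexLog_smul_deriv hφ hsupp]
  refine (tendsto_integral_complexLog_add_I_mul_smul_nhdsGT
    (hφ.continuous_deriv le_rfl) hsupp.deriv).neg.congr' ?_
  filter_upwards [self_mem_nhdsWithin] with u hu
  exact (integral_inv_add_I_mul_smul_eq_neg_integral_complexLog_smul_deriv hφ hsupp
    (ne_of_gt hu)).symm

theorem integral_inv_add_I_mul_smul_comp_neg (f : ℝ → E) (u : ℝ) :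
    ∫ x : ℝ, (x + Complex.I * u : ℂ)⁻¹ • f (-x) =
      -∫ x : ℝ, (x + Complex.I * (-u : ℝ) : ℂ)⁻¹ • f x := by
  rw [← integral_neg_eq_self, ← integral_neg]
  refine integral_congr_ae (ae_of_all _ fun x => ?_)
  have hneg : ((-x : ℝ) + Complex.I * u : ℂ) = -(x + Complex.I * (-u : ℝ)) := by
    push_cast
    ring
  simp only [hneg, inv_neg, neg_smul, neg_neg]

theorem integral_log_abs_smul_deriv_comp_neg (f : ℝ → E) :
    ∫ x : ℝ, (Real.log |x| : ℂ) • deriv (fun y => f (-y)) x =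
      -∫ x : ℝ, (Real.log |x| : ℂ) • deriv f x := by
  rw [← integral_neg_eq_self, ← integral_neg]
  simp only [deriv_comp_neg, abs_neg, neg_neg, smul_neg]

theorem tendsto_integral_inv_add_I_mul_smul_nhdsLT [CompleteSpace E] (hφ : ContDiff ℝ 1 φ)
    (hsupp : HasCompactSupport φ) :
    Tendsto (fun u : ℝ => ∫ x : ℝ, (x + Complex.I * u : ℂ)⁻¹ • φ x)
      (nhdsWithin 0 (Set.Iio 0))
      (nhds ((-∫ x : ℝ, (Real.log |x| : ℂ) • deriv φ x) + (Complex.I * Real.pi) • φ 0)) := by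
  have hneg_nhds : Tendsto (fun u : ℝ => -u) (nhdsWithin 0 (Set.Iio 0))
      (nhdsWithin 0 (Set.Ioi 0)) := by
    simpa using tendsto_neg_nhdsLT (a := (0 : ℝ))
  have hreflected := ((tendsto_integral_inv_add_I_mul_smul_nhdsGT (hφ.comp contDiff_neg)
    (hsupp.comp_homeomorph (Homeomorph.neg ℝ))).comp hneg_nhds).neg
  simpa only [Function.comp_def, integral_inv_add_I_mul_smul_comp_neg,
    integral_log_abs_smul_deriv_comp_neg, neg_neg, neg_zero, neg_sub, neg_add_eq_sub]
    using hreflected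

theorem sokhotski_plemelj_general [CompleteSpace E] (hφ : ContDiff ℝ 1 φ)
    (hsupp : HasCompactSupport φ) :
    Tendsto (fun u : ℝ => ∫ x : ℝ, (x + Complex.I * u : ℂ)⁻¹ • φ x)
      (nhdsWithin 0 (Set.Ioi 0))
      (nhds ((-∫ x : ℝ, (Real.log |x| : ℂ) • deriv φ x) - (Complex.I * Real.pi) • φ 0)) ∧
    Tendsto (fun u : ℝ => ∫ x : ℝ, (x + Complex.I * u : ℂ)⁻¹ • φ x)
      (nhdsWithin 0 (Set.Iio 0))
      (nhds ((-∫ x : ℝ, (Real.log |x| : ℂ) • deriv φ x) + (Complex.I * Real.pi) • φ 0)) :=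
  ⟨tendsto_integral_inv_add_I_mul_smul_nhdsGT hφ hsupp,
    tendsto_integral_inv_add_I_mul_smul_nhdsLT hφ hsupp⟩

end SokhotskiPlemelj

/-- For every test function `φ` on `ℝ`,
`lim_{u→0⁺} ∫ φ(x)/(x+iu) dx = -∫ φ'(x) ln|x| dx - iπ φ(0)` and
`lim_{u→0⁻} ∫ φ(x)/(x+iu) dx = -∫ φ'(x) ln|x| dx + iπ φ(0)`,
i.e. `1/(x ± i0) = 𝒫/x ∓ iπδ(x)`. -/
theorem sokhotski_plemelj (φ : ℝ → ℂ)
    (hφ : ContDiff ℝ (⊤ : ℕ∞) φ) (hsupp : HasCompactSupport φ) :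
    Tendsto (fun u : ℝ => ∫ x : ℝ, φ x / (x + Complex.I * u))
      (nhdsWithin 0 (Set.Ioi 0))
      (nhds ((-∫ x : ℝ, deriv φ x * (Real.log |x| : ℂ)) -
        Complex.I * Real.pi * φ 0)) ∧
    Tendsto (fun u : ℝ => ∫ x : ℝ, φ x / (x + Complex.I * u))
      (nhdsWithin 0 (Set.Iio 0))
      (nhds ((-∫ x : ℝ, deriv φ x * (Real.log |x| : ℂ)) +
        Complex.I * Real.pi * φ 0)) := by
  simpa only [smul_eq_mul, div_eq_inv_mul, mul_comm (deriv φ _)] using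
    sokhotski_plemelj_general (hφ.of_le (by exact_mod_cast le_top)) hsupp
end

section
/- Let H be a complex Hilbert space and U a unitary operator on H. For every z ∈ ℂ with |z| ≠ 1 the operator z·id_H − U is invertible in the bounded operators on H, and for every test function φ on ℂ there exists a bounded operator L on H such that ∫_{{z ∈ ℂ : | |z| − 1 | > ε}} φ(z)·(z·id_H − U)⁻¹ d²z converges to L in operator norm as ε → 0⁺. (Thus the resolvent of a unitary operator extends to a distribution on the whole complex plane.) -/
open MeasureTheory Filter

/-!
The functional calculus of a normal element `a` turns `∫ φ(z) (z - a)⁻¹ d²z` into the Cauchy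
transform `w ↦ ∫ φ(z) / (z - w) d²z`, evaluated at `a`. Splitting the integral at `|z - w| = r`
bounds the Cauchy transform uniformly in `w` by `2πr ‖φ‖_∞ + ‖φ‖₁ / r`. Cutting `φ` off near the
spectrum is a small perturbation in `L¹`, bounded in `L^∞`, so the Cauchy transforms of the
truncations converge uniformly, and hence their values at `a` converge in norm. Estimating the
norm under the integral sign would not do: `∫ |φ(z)| ‖(z - a)⁻¹‖ d²z` may diverge
logarithmically.
-/

open Metric Set
open scoped Topology Real

section Sphere

variable {E : Type*} [NormedAddCommGroup E] [NormedSpace ℝ E] [Nontrivial E]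

lemma exists_mem_sphere_dist_eq (x y : E) {r : ℝ} (hr : 0 ≤ r) :
    ∃ p ∈ sphere x r, dist y p = |dist y x - r| := by
  rcases eq_or_ne y x with rfl | hyx
  · obtain ⟨p, hp⟩ := NormedSpace.sphere_nonempty (x := y) |>.2 hr
    refine ⟨p, hp, ?_⟩
    rw [dist_self, zero_sub, abs_neg, abs_of_nonneg hr, dist_comm, mem_sphere.1 hp]
  · have hd : 0 < ‖y - x‖ := norm_pos_iff.2 (sub_ne_zero.2 hyx)
    refine ⟨x + (r / ‖y - x‖) • (y - x), ?_, ?_⟩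
    · rw [mem_sphere, dist_self_add_left, norm_smul, norm_div, norm_norm, Real.norm_of_nonneg hr,
        div_mul_cancel₀ r hd.ne']
    · have hsub : y - (x + (r / ‖y - x‖) • (y - x)) = (1 - r / ‖y - x‖) • (y - x) := by
        module
      rw [dist_eq_norm, dist_eq_norm, hsub, norm_smul, Real.norm_eq_abs,
        ← abs_of_pos hd, ← abs_mul, abs_of_pos hd, sub_mul, one_mul, div_mul_cancel₀ r hd.ne']

lemma infEDist_sphere (x y : E) {r : ℝ} (hr : 0 ≤ r) :
    infEDist y (sphere x r) = ENNReal.ofReal |dist y x - r| := by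
  apply le_antisymm
  · obtain ⟨p, hp, hyp⟩ := exists_mem_sphere_dist_eq x y hr
    exact hyp ▸ edist_dist y p ▸ infEDist_le_edist_of_mem hp
  · refine le_infEDist.2 fun p hp => ?_
    rw [edist_dist, ← mem_sphere.1 hp]
    exact ENNReal.ofReal_le_ofReal (abs_dist_sub_le y p x)

lemma compl_cthickening_sphere (x : E) {r ε : ℝ} (hr : 0 ≤ r) (hε : 0 ≤ ε) :
    (cthickening ε (sphere x r))ᶜ = {y | ε < |dist y x - r|} := by
  ext y
  rw [mem_compl_iff, mem_cthickening_iff, infEDist_sphere x y hr,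
    ENNReal.ofReal_le_ofReal_iff hε, not_le, mem_ofPred_eq]

end Sphere

section Indicator

variable {X E : Type*} [MeasurableSpace X] [NormedAddCommGroup E] {μ : Measure X} {f : X → E}

lemma ae_norm_indicator_le {M : ℝ} (hM : ∀ᵐ x ∂μ, ‖f x‖ ≤ M) (S : Set X) :
    ∀ᵐ x ∂μ, ‖S.indicator f x‖ ≤ M := by
  filter_upwards [hM] with x hx
  exact (norm_indicator_le_norm_self f x).trans hx

lemma tendsto_integral_norm_indicator_compl_cthickening_sub [PseudoEMetricSpace X]
    [OpensMeasurableSpace X] {s : Set X} (hs : IsClosed s) (hf : Integrable f μ) :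
    Tendsto (fun ε => ∫ x, ‖(cthickening ε s)ᶜ.indicator f x - sᶜ.indicator f x‖ ∂μ)
      (𝓝[>] 0) (𝓝 0) := by
  have hmeas (ε : ℝ) : MeasurableSet (cthickening ε s)ᶜ := isClosed_cthickening.measurableSet.compl
  suffices Tendsto (fun ε => ∫ x, ‖(cthickening ε s)ᶜ.indicator f x - sᶜ.indicator f x‖ ∂μ)
      (𝓝[>] 0) (𝓝 (∫ _, (0 : ℝ) ∂μ)) by simpa only [integral_zero] using this
  refine tendsto_integral_filter_of_dominated_convergence (fun x => ‖f x‖ + ‖f x‖)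
    (.of_forall fun ε => ((hf.indicator (hmeas ε)).sub
      (hf.indicator hs.measurableSet.compl)).norm.aestronglyMeasurable)
    (.of_forall fun ε => .of_forall fun x => ?_) (hf.norm.add hf.norm)
    (.of_forall fun x => tendsto_const_nhds.congr' ?_)
  · rw [norm_norm]
    exact norm_sub_le_of_le (norm_indicator_le_norm_self f x) (norm_indicator_le_norm_self f x)
  · by_cases hx : x ∈ s
    · refine .of_forall fun ε => ?_
      simp [hx, self_subset_cthickening s hx]
    · have hx' : x ∉ closure s := by rwa [hs.closure_eq]
      filter_upwards [nhdsWithin_le_nhds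
        (eventually_notMem_cthickening_of_infEDist_pos hx')] with ε hε
      simp [hx, hε]

end Indicator

section Kernel

variable {𝕜 : Type*} [NormedField 𝕜] {S t : Set 𝕜}

lemma norm_inv_sub_le_of_disjoint_thickening {ε : ℝ} (hε : 0 < ε)
    (hSt : Disjoint S (thickening ε t)) {z w : 𝕜} (hz : z ∈ S) (hw : w ∈ t) :
    ‖(z - w)⁻¹‖ ≤ ε⁻¹ := by
  rw [norm_inv, ← dist_eq_norm]
  gcongr
  exact not_lt.1 fun h => hSt.notMem_of_mem_left hz (mem_thickening_iff.2 ⟨w, hw, h⟩)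

lemma continuousOn_inv_sub_of_disjoint (hSt : Disjoint S t) :
    ContinuousOn (Function.uncurry fun z w : 𝕜 => (z - w)⁻¹) (S ×ˢ t) :=
  (continuous_fst.sub continuous_snd).continuousOn.inv₀ fun _ hp =>
    sub_ne_zero.2 (hSt.ne_of_mem hp.1 hp.2)

end Kernel

section CauchyTransform

/-- The Cauchy transform `w ↦ ∫ φ(z) / (z - w) d²z` of a function on the plane, without the
customary normalizing factor `-1/π`. -/
noncomputable def cauchyTransform (φ : ℂ → ℂ) (w : ℂ) : ℂ :=
  ∫ z, φ z * (z - w)⁻¹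

variable {φ : ℂ → ℂ} {M r : ℝ}

lemma cauchyTransform_indicator {S : Set ℂ} (hS : MeasurableSet S) (φ : ℂ → ℂ) (w : ℂ) :
    cauchyTransform (S.indicator φ) w = ∫ z in S, φ z * (z - w)⁻¹ := by
  rw [cauchyTransform, ← integral_indicator hS]
  congr 1 with z
  exact (indicator_mul_left S φ fun z => (z - w)⁻¹).symm

lemma integrableOn_ball_norm_inv_sub (w : ℂ) (r : ℝ) :
    IntegrableOn (fun z => ‖(z - w)⁻¹‖) (ball w r) := by
  have hball : (fun z : ℂ => z - w) ⁻¹' ball 0 r = ball w r := by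
    ext z
    simp [dist_eq_norm]
  have hzero : IntegrableOn (fun z : ℂ => ‖z⁻¹‖) (ball 0 r) := by
    simp only [norm_inv]
    rw [integrableOn_fun_norm_addHaar volume (f := fun x => x⁻¹), Complex.finrank_real_complex]
    refine (integrableOn_const (C := (1 : ℝ)) measure_Ioo_lt_top.ne).congr_fun
      (fun x hx => ?_) measurableSet_Ioo
    simp [hx.1.ne']
  rw [← hball]
  exact ((measurePreserving_sub_right volume w).integrableOn_comp_preimage
    (MeasurableEquiv.subRight w).measurableEmbedding).2 hzero

lemma setIntegral_ball_norm_inv_sub (w : ℂ) (hr : 0 ≤ r) :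
    ∫ z in ball w r, ‖(z - w)⁻¹‖ = 2 * π * r := by
  have hradial : (ball w r).indicator (fun z => ‖(z - w)⁻¹‖) =
      fun z => (Iio r).indicator (fun x => x⁻¹) ‖z - w‖ := by
    ext z
    simp [indicator, dist_eq_norm]
  have hpolar : EqOn (fun x : ℝ => x ^ (2 - 1) • (Iio r).indicator (fun x => x⁻¹) x)
      ((Iio r).indicator 1) (Ioi 0) := by
    intro x hx
    by_cases hxr : x < r <;> simp [hxr, (mem_Ioi.1 hx).ne']
  rw [← integral_indicator measurableSet_ball, hradial,
    integral_sub_right_eq_self (fun z => (Iio r).indicator (fun x => x⁻¹) ‖z‖) w,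
    integral_fun_norm_addHaar, Complex.finrank_real_complex,
    setIntegral_congr_fun measurableSet_Ioi hpolar, setIntegral_indicator measurableSet_Iio,
    Ioi_inter_Iio]
  simp [measureReal_def, hr, mul_assoc]

lemma norm_mul_inv_sub_le {c : ℂ} (hc : ‖c‖ ≤ M) (hr : 0 < r) (z w : ℂ) :
    ‖c * (z - w)⁻¹‖ ≤ M * (ball w r).indicator (fun z => ‖(z - w)⁻¹‖) z + r⁻¹ * ‖c‖ := by
  rw [norm_mul]
  by_cases hz : z ∈ ball w r
  · rw [indicator_of_mem hz]
    exact le_add_of_le_of_nonneg (by gcongr) (by positivity)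
  · rw [indicator_of_notMem hz, mul_zero, zero_add, norm_inv, mul_comm]
    gcongr
    simpa [dist_eq_norm] using hz

lemma integrable_cauchyTransform_majorant (hφ : Integrable φ) (M r : ℝ) (w : ℂ) :
    Integrable fun z =>
      M * (ball w r).indicator (fun z => ‖(z - w)⁻¹‖) z + r⁻¹ * ‖φ z‖ :=
  (((integrableOn_ball_norm_inv_sub w r).integrable_indicator measurableSet_ball).const_mul M).add
    (hφ.norm.const_mul r⁻¹)

lemma integrable_mul_inv_sub (hφ : Integrable φ) (hM : ∀ᵐ z, ‖φ z‖ ≤ M) (w : ℂ) :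
    Integrable fun z => φ z * (z - w)⁻¹ := by
  refine (integrable_cauchyTransform_majorant hφ M 1 w).mono'
    (hφ.aestronglyMeasurable.mul (by fun_prop)) ?_
  filter_upwards [hM] with z hz
  exact norm_mul_inv_sub_le hz one_pos z w

lemma cauchyTransform_sub {ψ : ℂ → ℂ} {N : ℝ} (hφ : Integrable φ) (hM : ∀ᵐ z, ‖φ z‖ ≤ M)
    (hψ : Integrable ψ) (hN : ∀ᵐ z, ‖ψ z‖ ≤ N) (w : ℂ) :
    cauchyTransform (φ - ψ) w = cauchyTransform φ w - cauchyTransform ψ w := by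
  simp only [cauchyTransform, Pi.sub_apply, sub_mul]
  exact integral_sub (integrable_mul_inv_sub hφ hM w) (integrable_mul_inv_sub hψ hN w)

lemma norm_cauchyTransform_le (hφ : Integrable φ) (hM : ∀ᵐ z, ‖φ z‖ ≤ M) (hr : 0 < r) (w : ℂ) :
    ‖cauchyTransform φ w‖ ≤ M * (2 * π * r) + r⁻¹ * ∫ z, ‖φ z‖ := by
  calc ‖cauchyTransform φ w‖
      ≤ ∫ z, (M * (ball w r).indicator (fun z => ‖(z - w)⁻¹‖) z + r⁻¹ * ‖φ z‖) := by
        refine norm_integral_le_of_norm_le (integrable_cauchyTransform_majorant hφ M r w) ?_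
        filter_upwards [hM] with z hz
        exact norm_mul_inv_sub_le hz hr z w
    _ = M * (2 * π * r) + r⁻¹ * ∫ z, ‖φ z‖ := by
        rw [integral_add
          (((integrableOn_ball_norm_inv_sub w r).integrable_indicator
            measurableSet_ball).const_mul M) (hφ.norm.const_mul r⁻¹),
          integral_const_mul, integral_const_mul, integral_indicator measurableSet_ball,
          setIntegral_ball_norm_inv_sub w hr.le]

lemma tendstoUniformly_cauchyTransform {ι : Type*} {l : Filter ι} {F : ι → ℂ → ℂ}
    (hF : ∀ i, Integrable (F i)) (hFM : ∀ i, ∀ᵐ z, ‖F i z‖ ≤ M)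
    (hφ : Integrable φ) (hφM : ∀ᵐ z, ‖φ z‖ ≤ M)
    (hlim : Tendsto (fun i => ∫ z, ‖F i z - φ z‖) l (𝓝 0)) :
    TendstoUniformly (fun i => cauchyTransform (F i)) (cauchyTransform φ) l := by
  rw [Metric.tendstoUniformly_iff]
  intro δ hδ
  obtain ⟨r, hr, hrδ⟩ := exists_pos_mul_lt (half_pos hδ) ((M + M) * (2 * π))
  have hlim_r : Tendsto (fun i => r⁻¹ * ∫ z, ‖F i z - φ z‖) l (𝓝 0) := by
    simpa only [mul_zero] using hlim.const_mul r⁻¹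
  filter_upwards [hlim_r.eventually_lt_const (half_pos hδ)] with i hi w
  have hdiffM : ∀ᵐ z, ‖(F i - φ) z‖ ≤ M + M := by
    filter_upwards [hFM i, hφM] with z hFz hφz
    exact norm_sub_le_of_le hFz hφz
  rw [dist_comm, dist_eq_norm, ← cauchyTransform_sub (hF i) (hFM i) hφ hφM]
  calc ‖cauchyTransform (F i - φ) w‖
      ≤ (M + M) * (2 * π * r) + r⁻¹ * ∫ z, ‖F i z - φ z‖ :=
        norm_cauchyTransform_le ((hF i).sub hφ) hdiffM hr w
    _ < δ / 2 + δ / 2 := add_lt_add (by rwa [← mul_assoc]) hi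
    _ = δ := add_halves δ

lemma continuousOn_cauchyTransform_indicator {S t : Set ℂ} {ε : ℝ} (hS : MeasurableSet S)
    (hφ : IntegrableOn φ S) (hε : 0 < ε) (hSt : Disjoint S (thickening ε t)) :
    ContinuousOn (cauchyTransform (S.indicator φ)) t := by
  have hker := continuousOn_inv_sub_of_disjoint (hSt.mono_right (self_subset_thickening hε t))
  refine (continuousOn_of_dominated (bound := fun z => ‖φ z‖ * ε⁻¹) (fun w _ => ?_)
    (fun w hw => ae_restrict_of_forall_mem hS fun z hz => ?_) (hφ.norm.mul_const ε⁻¹)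
    (ae_restrict_of_forall_mem hS fun z hz => ?_)).congr
      fun w _ => cauchyTransform_indicator hS φ w
  · exact hφ.aestronglyMeasurable.mul (by fun_prop)
  · rw [norm_mul]
    gcongr
    exact norm_inv_sub_le_of_disjoint_thickening hε hSt hz hw
  · exact continuousOn_const.mul
      (hker.comp (Continuous.prodMk_right z).continuousOn fun w hw => ⟨hz, hw⟩)

end CauchyTransform

section Normal

variable {A : Type*} [CStarAlgebra A] {a : A}

lemma cfc_mul_inv_sub [IsStarNormal a] (c : ℂ) {z : ℂ} (hz : z ∉ spectrum ℂ a) :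
    cfc (fun w => c * (z - w)⁻¹) a = c • resolvent a z := by
  have hne : ∀ w ∈ spectrum ℂ a, z - w ≠ 0 := fun w hw h => hz (sub_eq_zero.1 h ▸ hw)
  have hcont : ContinuousOn (fun w => (z - w)⁻¹) (spectrum ℂ a) :=
    (continuousOn_const.sub continuousOn_id).inv₀ hne
  rw [cfc_const_mul c (fun w => (z - w)⁻¹) a hcont, cfc_inv (fun w => z - w) a hne,
    cfc_sub (fun _ => z) (fun w => w) a, cfc_const z a, cfc_id' ℂ a, resolvent]

lemma cfc_cauchyTransform_indicator [IsStarNormal a] {φ : ℂ → ℂ} {S : Set ℂ} {ε : ℝ}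
    (hS : MeasurableSet S) (hφ : IntegrableOn φ S) (hε : 0 < ε)
    (hSa : Disjoint S (thickening ε (spectrum ℂ a))) :
    cfc (cauchyTransform (S.indicator φ)) a = ∫ z in S, φ z • resolvent a z := by
  have hdisj : Disjoint S (spectrum ℂ a) := hSa.mono_right (self_subset_thickening hε _)
  have hker := continuousOn_inv_sub_of_disjoint hdisj
  have hker_right (z : ℂ) (hz : z ∈ S) : ContinuousOn (fun w => (z - w)⁻¹) (spectrum ℂ a) :=
    hker.comp (Continuous.prodMk_right z).continuousOn fun w hw => ⟨hz, hw⟩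
  have hcont (z : ℂ) (hz : z ∈ S) : ContinuousOn (fun w => φ z * (z - w)⁻¹) (spectrum ℂ a) :=
    continuousOn_const.mul (hker_right z hz)
  have hcont_ae := ae_restrict_of_forall_mem (μ := volume) hS hcont
  have hbound : ∀ᵐ z ∂volume.restrict S, ∀ w ∈ spectrum ℂ a,
      ‖φ z * (z - w)⁻¹‖ ≤ ‖φ z‖ * ε⁻¹ :=
    ae_restrict_of_forall_mem hS fun z hz w hw => by
      rw [norm_mul]
      gcongr
      exact norm_inv_sub_le_of_disjoint_thickening hε hSa hz hw
  simp only [funext (cauchyTransform_indicator hS φ)]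
  -- `φ` is only measurable, so `cfc_setIntegral`, which asks for joint continuity, does not apply.
  rw [cfc_setIntegral' _ a hcont_ae ⟨?_, ContinuousMap.hasFiniteIntegral_mkD_restrict_of_bound
    _ _ hcont_ae (fun z => ‖φ z‖ * ε⁻¹) (hφ.norm.mul_const ε⁻¹).2 hbound⟩]
  · exact setIntegral_congr_fun hS fun z hz =>
      cfc_mul_inv_sub (φ z) (hdisj.notMem_of_mem_left hz)
  · refine (hφ.aestronglyMeasurable.smul
      (ContinuousMap.aeStronglyMeasurable_restrict_mkD_restrict_of_uncurry hS _ 0 hker)).congr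
        (ae_restrict_of_forall_mem hS fun z hz => ?_)
    ext w
    simp only [Pi.smul_apply', ContinuousMap.smul_apply, smul_eq_mul]
    rw [ContinuousMap.mkD_apply_of_continuousOn (hker_right z hz),
      ContinuousMap.mkD_apply_of_continuousOn (hcont z hz)]

theorem unitary_resolvent_distribution_general [IsStarNormal a] {s : Set ℂ} (hs : IsClosed s)
    (has : spectrum ℂ a ⊆ s) {φ : ℂ → ℂ} {M : ℝ} (hφ : Integrable φ) (hM : ∀ᵐ z, ‖φ z‖ ≤ M) :
    Tendsto (fun ε : ℝ => ∫ z in (cthickening ε s)ᶜ, φ z • resolvent a z) (𝓝[>] 0)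
      (𝓝 (cfc (cauchyTransform (sᶜ.indicator φ)) a)) := by
  have hmeas (ε : ℝ) : MeasurableSet (cthickening ε s)ᶜ := isClosed_cthickening.measurableSet.compl
  have hdisj (ε : ℝ) : Disjoint (cthickening ε s)ᶜ (thickening ε (spectrum ℂ a)) :=
    disjoint_compl_left_iff_subset.2
      ((thickening_subset_of_subset ε has).trans (thickening_subset_cthickening ε s))
  have hunif : TendstoUniformly (fun ε => cauchyTransform ((cthickening ε s)ᶜ.indicator φ))
      (cauchyTransform (sᶜ.indicator φ)) (𝓝[>] 0) :=
    tendstoUniformly_cauchyTransform (fun ε => hφ.indicator (hmeas ε))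
      (fun ε => ae_norm_indicator_le hM _) (hφ.indicator hs.measurableSet.compl)
      (ae_norm_indicator_le hM _) (tendsto_integral_norm_indicator_compl_cthickening_sub hs hφ)
  refine (tendsto_cfc_fun hunif.tendstoUniformlyOn ?_).congr' ?_
  · filter_upwards [self_mem_nhdsWithin] with ε hε
    exact continuousOn_cauchyTransform_indicator (hmeas ε) hφ.integrableOn hε (hdisj ε)
  · filter_upwards [self_mem_nhdsWithin] with ε hε
    exact cfc_cauchyTransform_indicator (hmeas ε) hφ.integrableOn hε (hdisj ε)

end Normal

lemma isUnit_smul_one_sub_of_mem_unitary {A : Type*} [CStarAlgebra A] {u : A} (hu : u ∈ unitary A)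
    {z : ℂ} (hz : ‖z‖ ≠ 1) : IsUnit (z • (1 : A) - u) := by
  rw [← Algebra.algebraMap_eq_smul_one, ← spectrum.notMem_iff]
  exact fun h => hz (spectrum.norm_eq_one_of_unitary hu h)

/-- For a unitary operator `U` on a complex Hilbert space `H`, the
operator `z•1 - U` is invertible for `|z| ≠ 1`, and for every test function `φ` on `ℂ`
the integrals `∫_{| |z|-1 | > ε} φ(z) (z•1-U)⁻¹ d²z` converge in operator norm as
`ε → 0⁺`: the resolvent of a unitary operator extends to a distribution on all of `ℂ`. -/
theorem unitary_resolvent_distribution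
    (H : Type*) [NormedAddCommGroup H] [InnerProductSpace ℂ H] [CompleteSpace H]
    (U : H →L[ℂ] H) (hU : U ∈ unitary (H →L[ℂ] H)) :
    (∀ z : ℂ, ‖z‖ ≠ 1 → IsUnit (z • (1 : H →L[ℂ] H) - U)) ∧
    ∀ φ : ℂ → ℂ, ContDiff ℝ (⊤ : ℕ∞) φ → HasCompactSupport φ →
      ∃ L : H →L[ℂ] H,
        Tendsto (fun ε : ℝ =>
            ∫ z in {z : ℂ | ε < |‖z‖ - 1|}, φ z • Ring.inverse (z • (1 : H →L[ℂ] H) - U))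
          (nhdsWithin 0 (Set.Ioi 0)) (nhds L) := by
  refine ⟨fun z hz => isUnit_smul_one_sub_of_mem_unitary hU hz, fun φ hφ hc => ?_⟩
  have hn : IsStarNormal U := isStarNormal_of_mem_unitary hU
  obtain ⟨M, hM⟩ := hc.exists_bound_of_continuous hφ.continuous
  refine ⟨_, (unitary_resolvent_distribution_general isClosed_sphere
    (spectrum.subset_circle_of_unitary hU)
    (hφ.continuous.integrable_of_hasCompactSupport hc) (.of_forall hM)).congr' ?_⟩
  filter_upwards [self_mem_nhdsWithin] with ε hε
  simp only [compl_cthickening_sphere (0 : ℂ) zero_le_one (mem_Ioi.1 hε).le, dist_zero_right,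
    resolvent, Algebra.algebraMap_eq_smul_one]
end
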